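/- Let G be the parallel composition of r ≥ 2 paths whose lengths have mixed parities (at least one path of odd length and at least one path of even length), let H_1 be the parallel composition of the paths of odd length, and let H_2 be the parallel composition of the paths of even length. Then reg(G) ≥ reg(H_1) + reg(H_2) + (q−2). -/

import Mathlib

open MvPolynomial

/-- A finite multigraph without loops: each edge `e` has two distinct endpoints
`fst e` and `snd e`.  Multiple edges with the same endpoints are allowed. -/
structure Multigraph (V E : Type) : Type where
  fst : E → V
  snd : E → V
  ne : ∀ e, fst e ≠ snd e

namespace Multigraph

variable {V E : Type}

/-- Vertex `v` is an endpoint of the edge `e`. -/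
def Incident (G : Multigraph V E) (v : V) (e : E) : Prop :=
  G.fst e = v ∨ G.snd e = v

instance (G : Multigraph V E) [DecidableEq V] (v : V) : DecidablePred (G.Incident v) :=
  fun e => inferInstanceAs (Decidable (G.fst e = v ∨ G.snd e = v))

/-- The degree of a vertex: the number of edges incident to it. -/
noncomputable def degree (G : Multigraph V E) (v : V) : ℕ :=
  Nat.card {e : E // G.Incident v e}

/-- The graph has no isolated vertices. -/
def NoIsolated (G : Multigraph V E) : Prop :=
  ∀ v : V, ∃ e : E, G.Incident v e

variable (K : Type) [Field K] [Fintype K]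

/-- The point of the affine torus associated with an assignment `x` of nonzero
scalars to the vertices: its coordinate at an edge `e = {v,w}` is `x v * x w`. -/
def point (G : Multigraph V E) (x : V → Kˣ) : E → K :=
  fun e => (x (G.fst e) : K) * (x (G.snd e) : K)

/-- The projective toric subset `X` parameterized by `G`, realized as the set of
`Kˣ`-orbits (i.e. projective points) of the points `G.point K x`, `x : V → Kˣ`. -/
def toricSet (G : Multigraph V E) : Set (Set (E → K)) :=
  Set.range fun x : V → Kˣ => MulAction.orbit Kˣ (G.point K x)

/-- The vanishing ideal `I(X)` of the projective toric subset parameterized by `G`: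
the ideal of all polynomials each of whose homogeneous components vanishes at the
point `G.point K x` for every `x : V → Kˣ`. -/
def vanishingIdeal (G : Multigraph V E) : Ideal (MvPolynomial E K) where
  carrier := {f | ∀ (x : V → Kˣ) (d : ℕ), eval (G.point K x) (homogeneousComponent d f) = 0}
  zero_mem' := by intro x d; simp
  add_mem' := by
    intro a b ha hb x d
    rw [map_add, map_add, ha x d, hb x d, add_zero]
  smul_mem' := by
    intro c f hf x n
    rw [smul_eq_mul, ← sum_homogeneousComponent f, Finset.mul_sum, map_sum, map_sum]
    refine Finset.sum_eq_zero fun d _ => ?_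
    nth_rewrite 1 [← sum_homogeneousComponent c]
    rw [Finset.sum_mul, map_sum, map_sum]
    refine Finset.sum_eq_zero fun e _ => ?_
    have h1 : (homogeneousComponent e c * homogeneousComponent d f).IsHomogeneous (e + d) :=
      (homogeneousComponent_isHomogeneous e c).mul (homogeneousComponent_isHomogeneous d f)
    rw [homogeneousComponent_of_mem ((mem_homogeneousSubmodule _ _).mpr h1)]
    split_ifs
    · rw [map_mul, hf x d, mul_zero]
    · simp

/-- The Hilbert function of `S/I(X)`: the dimension over `K` of the degree-`d`
homogeneous component of the quotient, realized as the image of the space of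
degree-`d` homogeneous polynomials in the quotient. -/
noncomputable def hilbert (G : Multigraph V E) (d : ℕ) : ℕ :=
  Module.finrank K
    ((homogeneousSubmodule E K d).map (Ideal.Quotient.mkₐ K (G.vanishingIdeal K)).toLinearMap)

/-- The regularity `reg G`: the least `d` such that the Hilbert function of `S/I(X)`
at `d` equals the number of points of `X`. -/
noncomputable def reg (G : Multigraph V E) : ℕ :=
  sInf {d : ℕ | G.hilbert K d = (G.toricSet K).ncard}

/-- The graph obtained from `G` by deleting a vertex `v` and all edges incident
to it. -/
def deleteVert (G : Multigraph V E) (v : V) :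
    Multigraph {w : V // w ≠ v} {e : E // ¬ G.Incident v e} where
  fst e := ⟨G.fst e.1, fun h => e.2 (Or.inl h)⟩
  snd e := ⟨G.snd e.1, fun h => e.2 (Or.inr h)⟩
  ne e h := G.ne e.1 (congrArg Subtype.val h)

/-- The graph obtained from `G` by identifying the vertex `v₂` with the vertex `v₁`:
the edges are the same, and every endpoint equal to `v₂` is replaced by `v₁`.
This requires that `{v₁, v₂}` is a non-edge of `G`, so that no loops are created. -/
def identifyVert [DecidableEq V] (G : Multigraph V E) (v₁ v₂ : V) (h12 : v₁ ≠ v₂)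
    (h : ∀ e, ¬ (G.Incident v₁ e ∧ G.Incident v₂ e)) :
    Multigraph {w : V // w ≠ v₂} E where
  fst e := ⟨if G.fst e = v₂ then v₁ else G.fst e, by split_ifs with hh; exacts [h12, hh]⟩
  snd e := ⟨if G.snd e = v₂ then v₁ else G.snd e, by split_ifs with hh; exacts [h12, hh]⟩
  ne := by
    intro e heq
    rw [Subtype.ext_iff] at heq
    simp only at heq
    split_ifs at heq with h1 h2 h2
    · exact G.ne e (h1.trans h2.symm)
    · exact h e ⟨Or.inr heq.symm, Or.inl h1⟩
    · exact h e ⟨Or.inl heq, Or.inr h2⟩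
    · exact G.ne e heq

/-- The subgraph of `G` determined by a set `A` of edges of `G`, together with all
endpoints of those edges (so it has no isolated vertices). -/
def subgraph [DecidableEq V] (G : Multigraph V E) (A : Finset E) :
    Multigraph {v : V // ∃ e ∈ A, G.Incident v e} {e : E // e ∈ A} where
  fst e := ⟨G.fst e.1, e.1, e.2, Or.inl rfl⟩
  snd e := ⟨G.snd e.1, e.1, e.2, Or.inr rfl⟩
  ne e h := G.ne e.1 (congrArg Subtype.val h)

end Multigraph

/-- The vertex of the parallel composition of paths of lengths `k i` lying on the
`i`-th path at distance `j` from the common initial vertex:  `j = 0` gives the common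
initial vertex, `j = k i` the common terminal vertex, and `0 < j < k i` gives the
`j`-th interior vertex of the `i`-th path. -/
def pcVert {ι : Type} (k : ι → ℕ) (i : ι) (j : ℕ) :
    Bool ⊕ ((i : ι) × Fin (k i - 1)) :=
  if h0 : j = 0 then Sum.inl false
  else if h : j < k i then Sum.inr ⟨i, ⟨j - 1, by omega⟩⟩
  else Sum.inl true

/-- The parallel composition of the family of paths `P i` of lengths `k i` (`i : ι`):
the `i`-th path has `k i` edges indexed by `Fin (k i)`, its `j`-th edge joining the
vertices of the `i`-th path at distances `j` and `j + 1` from the common initial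
vertex.  All the initial vertices of the paths are identified to a single vertex and
all the terminal vertices are identified to a single vertex. -/
def parallelComp {ι : Type} (k : ι → ℕ) :
    Multigraph (Bool ⊕ ((i : ι) × Fin (k i - 1))) ((i : ι) × Fin (k i)) where
  fst e := pcVert k e.1 e.2.1
  snd e := pcVert k e.1 (e.2.1 + 1)
  ne := by
    rintro ⟨i, j⟩ h
    have hj := j.2
    simp only [pcVert] at h
    split_ifs at h <;> simp_all <;> omega

/-- The monomial `f i`: the product of the edges of the `i`-th path of the parallel
composition in odd positions (positions `1, 3, 5, ...`, i.e. indices `0, 2, 4, ...`). -/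
noncomputable def oddProd {ι : Type} (K : Type) [Field K] (k : ι → ℕ) (i : ι) :
    MvPolynomial ((i : ι) × Fin (k i)) K :=
  ∏ m : Fin ((k i + 1) / 2), X ⟨i, ⟨2 * m.1, by have := m.2; omega⟩⟩

/-- The monomial `g i`: the product of the edges of the `i`-th path of the parallel
composition in even positions (positions `2, 4, 6, ...`, i.e. indices `1, 3, 5, ...`). -/
noncomputable def evenProd {ι : Type} (K : Type) [Field K] (k : ι → ℕ) (i : ι) :
    MvPolynomial ((i : ι) × Fin (k i)) K :=
  ∏ m : Fin (k i / 2), X ⟨i, ⟨2 * m.1 + 1, by have := m.2; omega⟩⟩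

namespace RegAux
open Multigraph

lemma finrank_map_eq {K A B C : Type} [Field K] [AddCommGroup A] [Module K A] [AddCommGroup B]
    [Module K B] [AddCommGroup C] [Module K C] (p : Submodule K A) (f : A →ₗ[K] B) (g : A →ₗ[K] C)
    (h : ∀ a ∈ p, f a = 0 ↔ g a = 0) :
    Module.finrank K (p.map f) = Module.finrank K (p.map g) := by
  have h1 : LinearMap.ker (f.domRestrict p) = LinearMap.ker (g.domRestrict p) := by
    ext a
    simpa using h a.1 a.2
  rw [← LinearMap.range_domRestrict, ← LinearMap.range_domRestrict]
  exact (((f.domRestrict p).quotKerEquivRange.symm.trans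
    (Submodule.quotEquivOfEq _ _ h1)).trans (g.domRestrict p).quotKerEquivRange).finrank_eq

variable {V E : Type} (K : Type) [Field K] [Fintype K]

lemma mk_eq_zero_iff (G : Multigraph V E) (d : ℕ) (f : MvPolynomial E K)
    (hf : f ∈ homogeneousSubmodule E K d) :
    (Ideal.Quotient.mkₐ K (G.vanishingIdeal K)).toLinearMap f = 0 ↔
      ∀ x : V → Kˣ, eval (G.point K x) f = 0 := by
  have : (Ideal.Quotient.mkₐ K (G.vanishingIdeal K)).toLinearMap f = 0 ↔
      f ∈ G.vanishingIdeal K := by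
    simp [Ideal.Quotient.eq_zero_iff_mem]
  rw [this]
  change (∀ (x : V → Kˣ) (d : ℕ), eval (G.point K x) (homogeneousComponent d f) = 0) ↔ _
  constructor
  · intro h x
    have := h x d
    rwa [homogeneousComponent_of_mem hf, if_pos rfl] at this
  · intro h x n
    rw [homogeneousComponent_of_mem hf]
    split_ifs
    · exact h x
    · simp

/-- The character attached to an exponent vector. -/
def chi [Fintype E] (G : Multigraph V E) (a : E → ℕ) : (V → Kˣ) →* K where
  toFun x := ∏ e, (G.point K x e) ^ a e
  map_one' := by simp [point]
  map_mul' x y := by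
    rw [← Finset.prod_mul_distrib]
    refine Finset.prod_congr rfl fun e _ => ?_
    rw [← mul_pow]
    simp only [point, Pi.mul_apply, Units.val_mul]
    congr 1; ring

def SS [Fintype E] (G : Multigraph V E) (d : ℕ) : Set ((V → Kˣ) →* K) :=
  {c | ∃ a : E → ℕ, ∑ e, a e = d ∧ chi K G a = c}

/-- evaluation at a family of points -/
noncomputable def ev {T : Type} (P : T → E → K) : MvPolynomial E K →ₗ[K] (T → K) :=
  LinearMap.pi fun x => (aeval (P x) : MvPolynomial E K →ₐ[K] K).toLinearMap

lemma ev_apply {T : Type} (P : T → E → K) (f : MvPolynomial E K) (x : T) :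
    ev K P f x = eval (P x) f := by
  simp [ev, aeval_eq_eval]

lemma homog_eq_span (d : ℕ) : homogeneousSubmodule E K d =
    Submodule.span K (Set.image (fun a => (monomial a 1 : MvPolynomial E K))
      {a : E →₀ ℕ | a.degree = d}) := by
  apply le_antisymm
  · intro f hf
    rw [f.as_sum]
    refine Submodule.sum_mem _ fun a ha => ?_
    have : (monomial a (coeff a f) : MvPolynomial E K) = coeff a f • monomial a 1 := by
      rw [smul_monomial]; simp
    rw [this]
    refine Submodule.smul_mem _ _ (Submodule.subset_span ⟨a, ?_, rfl⟩)
    have h := (mem_homogeneousSubmodule _ _).1 hf (mem_support_iff.1 ha)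
    change a.degree = d
    rw [Finsupp.degree_eq_weight_one]
    exact h
  · rw [Submodule.span_le]
    rintro _ ⟨a, ha, rfl⟩
    exact isHomogeneous_monomial _ ha

lemma hilbert_eq [Fintype E] [Finite V] (G : Multigraph V E) (d : ℕ) :
    G.hilbert K d = (SS K G d).ncard := by
  unfold hilbert
  rw [finrank_map_eq _ _ (ev K (G.point K)) (fun f hf => by
    rw [mk_eq_zero_iff K G d f hf, funext_iff]; simp [ev_apply])]
  have h1 : (homogeneousSubmodule E K d).map (ev K (G.point K)) =
      Submodule.span K (Set.image (fun c : (V → Kˣ) →* K => (c : (V → Kˣ) → K)) (SS K G d)) := by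
    rw [homog_eq_span]
    rw [Submodule.map_span]
    congr 1
    ext c
    simp only [Set.mem_image, SS, Set.mem_ofPred_eq, exists_exists_and_eq_and]
    have key : ∀ a : E →₀ ℕ, ev K (G.point K) (monomial a 1) = chi K G a := by
      intro a
      ext x
      rw [ev_apply, eval_monomial, one_mul, Finsupp.prod_fintype _ _ (by simp)]
      rfl
    constructor
    · rintro ⟨a, ha, rfl⟩
      exact ⟨a, by rw [← ha, Finsupp.degree_eq_sum], (key a).symm⟩
    · rintro ⟨a, ha, rfl⟩
      refine ⟨Finsupp.equivFunOnFinite.symm a, ?_, ?_⟩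
      · rw [Finsupp.degree_eq_sum, ← ha]; rfl
      · rw [key]; rfl
  rw [h1]
  have hli := linearIndependent_monoidHom (V → Kˣ) K
  have hinj : Function.Injective (fun c : (V → Kˣ) →* K => (c : (V → Kˣ) → K)) :=
    DFunLike.coe_injective
  have hs := (hli.comp (Subtype.val : SS K G d → _) Subtype.val_injective)
  have hfin : Finite ((V → Kˣ) →* K) := DFunLike.finite _
  have := Fintype.ofFinite (SS K G d)
  rw [← Set.ncard_image_of_injective _ hinj, Set.image_eq_range]
  have h3 := finrank_span_eq_card hs
  change Module.finrank K (Submodule.span K (Set.range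
    ((fun c : (V → Kˣ) →* K => (c : (V → Kˣ) → K)) ∘ (Subtype.val : SS K G d → _)))) =
    (Set.range ((fun c : (V → Kˣ) →* K => (c : (V → Kˣ) → K)) ∘
      (Subtype.val : SS K G d → _))).ncard
  rw [← Nat.card_coe_set_eq, Nat.card_range_of_injective (hinj.comp Subtype.val_injective),
    Nat.card_eq_fintype_card]
  exact h3


lemma eval_smul_homog (d : ℕ) (f : MvPolynomial E K) (hf : f ∈ homogeneousSubmodule E K d)
    (c : K) (p : E → K) : eval (c • p) f = c ^ d * eval p f := by
  rw [homog_eq_span] at hf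
  induction hf using Submodule.span_induction with
  | mem x h =>
    obtain ⟨a, ha, rfl⟩ := h
    have ha' : a.degree = d := ha
    rw [eval_monomial, eval_monomial, one_mul, one_mul, Finsupp.prod, Finsupp.prod, ← ha',
      Finsupp.degree_apply, ← Finset.prod_pow_eq_pow_sum, ← Finset.prod_mul_distrib]
    simp [mul_pow]
  | zero => simp
  | add x y _ _ hx hy => rw [map_add, map_add, hx, hy, mul_add]
  | smul r x _ hx => rw [smul_eval, smul_eval, hx]; ring

lemma exists_sep [Finite V] [Fintype E] [Nonempty E] (G : Multigraph V E) (x y : V → Kˣ)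
    (h : MulAction.orbit Kˣ (G.point K x) ≠ MulAction.orbit Kˣ (G.point K y)) :
    ∃ f : MvPolynomial E K, f.IsHomogeneous 1 ∧ eval (G.point K x) f ≠ 0 ∧
      eval (G.point K y) f = 0 := by
  by_contra! hcon
  apply h
  rw [MulAction.orbit_eq_iff]
  obtain ⟨e₀⟩ := ‹Nonempty E›
  have hne : ∀ (z : V → Kˣ) e, G.point K z e ≠ 0 := fun z e => by simp [point]
  refine ⟨Units.mk0 (G.point K x e₀ / G.point K y e₀) (div_ne_zero (hne _ _) (hne _ _)), ?_⟩
  ext e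
  by_contra hc
  have := hcon (C (G.point K y e₀) * X e - C (G.point K y e) * X e₀)
    (((isHomogeneous_C_mul_X _ _)).sub (isHomogeneous_C_mul_X _ _)) (by
      simp only [map_sub, map_mul, eval_C, eval_X]
      intro h0
      apply hc
      simp only [Units.smul_mk0, Pi.smul_apply, smul_eq_mul]
      have := hne y e₀
      field_simp
      linear_combination -h0)
  apply this
  simp only [map_sub, map_mul, eval_C, eval_X]
  ring

lemma hilbert_large [Finite V] [Fintype E] [Nonempty E] (G : Multigraph V E) :
    ∃ N, ∀ D ≥ N, G.hilbert K D = (G.toricSet K).ncard := by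
  classical
  have hfin : (G.toricSet K).Finite := Set.finite_range _
  have := hfin.fintype
  obtain ⟨e₀⟩ := id ‹Nonempty E›
  have hne : ∀ (z : V → Kˣ) e, G.point K z e ≠ 0 := fun z e => by simp [point]
  choose rep hrep using fun p : G.toricSet K => p.2
  simp only at hrep
  refine ⟨Fintype.card (G.toricSet K), fun D hD => ?_⟩
  unfold hilbert
  rw [finrank_map_eq _ _ (ev K fun p => G.point K (rep p)) (fun f hf => by
    rw [mk_eq_zero_iff K G D f hf, funext_iff]
    simp only [ev_apply, Pi.zero_apply]
    constructor
    · intro h p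
      exact h _
    · intro h x
      have h1 := hrep ⟨_, x, rfl⟩
      have h2 := MulAction.orbit_eq_iff.1 h1.symm
      obtain ⟨c, hc⟩ := h2
      have hc' : (c : K) • G.point K (rep ⟨_, x, rfl⟩) = G.point K x := hc
      rw [← hc', eval_smul_homog K D f hf, h, mul_zero])]
  have htop : (homogeneousSubmodule E K D).map (ev K fun p => G.point K (rep p)) = ⊤ := by
    have hsep : ∀ p p' : G.toricSet K, p ≠ p' → ∃ f : MvPolynomial E K, f.IsHomogeneous 1 ∧
        eval (G.point K (rep p)) f ≠ 0 ∧ eval (G.point K (rep p')) f = 0 := by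
      intro p p' hp
      apply exists_sep
      rw [hrep, hrep]
      exact fun h => hp (Subtype.ext h)
    choose! l hl1 hl2 hl3 using hsep
    rw [eq_top_iff, ← (Pi.basisFun K (G.toricSet K)).span_eq, Submodule.span_le]
    rintro _ ⟨p, rfl⟩
    let F : MvPolynomial E K := X e₀ ^ (D - (Finset.univ.erase p).card) *
      ∏ p' ∈ Finset.univ.erase p, l p p'
    have hF : F ∈ homogeneousSubmodule E K D := by
      have h1 : (X e₀ ^ (D - (Finset.univ.erase p).card) : MvPolynomial E K).IsHomogeneous
        (D - (Finset.univ.erase p).card) := isHomogeneous_X_pow _ _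
      have h2 : (∏ p' ∈ Finset.univ.erase p, l p p').IsHomogeneous
          (∑ p' ∈ Finset.univ.erase p, 1) :=
        IsHomogeneous.prod _ _ _ fun p' hp' => hl1 _ _ (Finset.ne_of_mem_erase hp').symm
      have h3 := h1.mul h2
      have hle : (Finset.univ.erase p).card ≤ D :=
        (Finset.card_le_univ _).trans hD
      rw [Finset.sum_const, smul_eq_mul, mul_one, Nat.sub_add_cancel hle] at h3
      exact h3
    have hF0 : eval (G.point K (rep p)) F ≠ 0 := by
      simp only [F, map_mul, map_pow, eval_X, map_prod]
      refine mul_ne_zero (pow_ne_zero _ (hne _ _)) (Finset.prod_ne_zero_iff.2 fun p' hp' => ?_)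
      exact hl2 _ _ (Finset.ne_of_mem_erase hp').symm
    refine ⟨(eval (G.point K (rep p)) F)⁻¹ • F, Submodule.smul_mem _ _ hF, ?_⟩
    ext p'
    rw [ev_apply, smul_eval, Pi.basisFun_apply]
    by_cases h : p' = p
    · subst h
      simp [hF0]
    · rw [Pi.single_eq_of_ne h]
      have : eval (G.point K (rep p')) F = 0 := by
        simp only [F, map_mul, map_prod]
        rw [Finset.prod_eq_zero (i := p') (by simp [h]) (hl3 _ _ (Ne.symm h)), mul_zero]
      rw [this, mul_zero]
  rw [htop, finrank_top, Module.finrank_fintype_fun_eq_card, ← Nat.card_eq_fintype_card,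
    Nat.card_coe_set_eq]

/-- Vertex weights modulo `n` of an edge vector. -/
def wt [Fintype E] [DecidableEq V] {R : Type} [AddCommMonoid R] (G : Multigraph V E)
    (a : E → R) (v : V) : R :=
  ∑ e, ((if G.fst e = v then a e else 0) + (if G.snd e = v then a e else 0))

lemma chi_eq_prod [Fintype E] [Fintype V] [DecidableEq V] (G : Multigraph V E) (a : E → ℕ)
    (x : V → Kˣ) : chi K G a x = ((∏ v, x v ^ wt G a v : Kˣ) : K) := by
  have : chi K G a x = ((∏ e, (x (G.fst e) * x (G.snd e)) ^ a e : Kˣ) : K) := by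
    simp [chi, point]
  rw [this]
  congr 1
  unfold wt
  simp_rw [← Finset.prod_pow_eq_pow_sum]
  rw [Finset.prod_comm]
  refine Finset.prod_congr rfl fun e _ => ?_
  simp_rw [pow_add, Finset.prod_mul_distrib, mul_pow]
  congr 1
  · rw [Finset.prod_eq_single (G.fst e)] <;> simp +contextual [eq_comm]
  · rw [Finset.prod_eq_single (G.snd e)] <;> simp +contextual [eq_comm]

lemma units_pow_eq {n n' : ℕ} (h : (n : ZMod (Fintype.card K - 1)) = n') (u : Kˣ) :
    u ^ n = u ^ n' := by
  classical
  rw [pow_eq_pow_iff_modEq]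
  refine ((ZMod.natCast_eq_natCast_iff _ _ _).1 h).of_dvd ?_
  rw [← Fintype.card_units]
  exact orderOf_dvd_card

lemma wt_cast [Fintype E] [DecidableEq V] (G : Multigraph V E) (a : E → ℕ) (v : V) (n : ℕ) :
    ((wt G a v : ℕ) : ZMod n) = wt G (fun e => (a e : ZMod n)) v := by
  simp [wt]

lemma chi_eq_iff [Fintype E] [Fintype V] [DecidableEq V] (G : Multigraph V E) (a b : E → ℕ) :
    chi K G a = chi K G b ↔ ∀ v, wt G (fun e => (a e : ZMod (Fintype.card K - 1))) v =
      wt G (fun e => (b e : ZMod (Fintype.card K - 1))) v := by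
  classical
  simp_rw [← wt_cast]
  constructor
  · intro h v
    obtain ⟨g, hg⟩ := IsCyclic.exists_generator (α := Kˣ)
    have h1 := DFunLike.congr_fun h (Pi.mulSingle v g)
    rw [chi_eq_prod, chi_eq_prod, Units.val_inj] at h1
    have key : ∀ n : V → ℕ, ∏ w, (Pi.mulSingle v g : V → Kˣ) w ^ n w = g ^ n v := by
      intro n
      rw [Finset.prod_eq_single v]
      · simp
      · intro w _ hw
        rw [Pi.mulSingle_eq_of_ne hw, one_pow]
      · simp
    rw [key, key, pow_eq_pow_iff_modEq, orderOf_eq_card_of_forall_mem_zpowers hg,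
      Nat.card_eq_fintype_card, Fintype.card_units] at h1
    exact (ZMod.natCast_eq_natCast_iff _ _ _).2 h1
  · intro h
    refine DFunLike.ext _ _ fun x => ?_
    rw [chi_eq_prod, chi_eq_prod]
    congr 1
    exact Finset.prod_congr rfl fun v _ => units_pow_eq K (h v) _

lemma chi_add [Fintype E] (G : Multigraph V E) (a b : E → ℕ) :
    chi K G (a + b) = chi K G a * chi K G b := by
  ext x
  simp [chi, pow_add, Finset.prod_mul_distrib]

lemma chi_single [Fintype E] [DecidableEq E] (G : Multigraph V E) (e : E) (j : ℕ) :
    chi K G (Pi.single e (j * (Fintype.card K - 1))) = 1 := by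
  ext x
  simp only [chi, MonoidHom.coe_mk, OneHom.coe_mk, MonoidHom.one_apply]
  rw [Finset.prod_eq_single e]
  · rw [Pi.single_eq_same, mul_comm, pow_mul, FiniteField.pow_card_sub_one_eq_one, one_pow]
    simp [point]
  · intro w _ hw
    rw [Pi.single_eq_of_ne hw, pow_zero]
  · simp

/-- All classes in degree `d` are represented by monomials of degree `d`. -/
def Full [Fintype E] (G : Multigraph V E) (d : ℕ) : Prop :=
  ∀ a : E → ℕ, ∑ e, a e ≡ d [MOD (Fintype.card K - 1)] →
    ∃ a' : E → ℕ, ∑ e, a' e = d ∧ chi K G a' = chi K G a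

lemma SS_mono [Fintype E] [Nonempty E] (G : Multigraph V E) (d j : ℕ) :
    SS K G d ⊆ SS K G (d + j * (Fintype.card K - 1)) := by
  classical
  obtain ⟨e⟩ := ‹Nonempty E›
  rintro _ ⟨a, ha, rfl⟩
  refine ⟨a + Pi.single e (j * (Fintype.card K - 1)), ?_, ?_⟩
  · simp [Finset.sum_add_distrib, ha]
  · rw [chi_add, chi_single, mul_one]

lemma card_pos' : 0 < Fintype.card K - 1 := by
  have := Fintype.one_lt_card (α := K)
  omega

lemma hilbert_eq_iff [Fintype E] [Finite V] [Nonempty E] (G : Multigraph V E) (d : ℕ) :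
    G.hilbert K d = (G.toricSet K).ncard ↔ Full K G d := by
  classical
  have hm := card_pos' K
  have hfin : Finite ((V → Kˣ) →* K) := DFunLike.finite _
  obtain ⟨N, hN⟩ := hilbert_large K G
  have hN' : ∀ j ≥ N, (SS K G (d + j * (Fintype.card K - 1))).ncard = (G.toricSet K).ncard := by
    intro j hj
    rw [← hilbert_eq, hN]
    nlinarith
  rw [hilbert_eq]
  constructor
  · intro h a ha
    have heq := Set.eq_of_subset_of_ncard_le (SS_mono K G d (N + ∑ e, a e))
      (by rw [hN' _ (by omega), h]) (Set.toFinite _)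
    have : chi K G a ∈ SS K G (d + (N + ∑ e, a e) * (Fintype.card K - 1)) := by
      have hle : ∑ e, a e ≤ d + (N + ∑ e, a e) * (Fintype.card K - 1) := by
        have := Nat.le_mul_of_pos_right (N + ∑ e, a e) hm
        omega
      have hdvd : (Fintype.card K - 1) ∣
          d + (N + ∑ e, a e) * (Fintype.card K - 1) - ∑ e, a e := by
        refine (Nat.modEq_iff_dvd' hle).1 (ha.trans ?_)
        simp [Nat.ModEq]
      obtain ⟨j, hj⟩ := hdvd
      have := SS_mono K G (∑ e, a e) j ⟨a, rfl, rfl⟩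
      rwa [show ∑ e, a e + j * (Fintype.card K - 1) =
        d + (N + ∑ e, a e) * (Fintype.card K - 1) by rw [mul_comm j]; omega] at this
    rw [← heq] at this
    exact this
  · intro h
    rw [← hN' N le_rfl]
    congr 1
    refine (SS_mono K G d N).antisymm ?_
    rintro _ ⟨a, ha, rfl⟩
    exact h a (by rw [ha]; simp [Nat.ModEq])

lemma Full.succ [Fintype E] [Nonempty E] (G : Multigraph V E) (d : ℕ) (h : Full K G d) :
    Full K G (d + 1) := by
  classical
  obtain ⟨e⟩ := ‹Nonempty E›
  have hm := card_pos' K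
  intro a ha
  obtain ⟨a', h1, h2⟩ := h (a + Pi.single e (Fintype.card K - 1 - 1)) (by
    simp only [Pi.add_apply, Finset.sum_add_distrib, Finset.sum_pi_single', Finset.mem_univ,
      if_true]
    refine Nat.ModEq.add_right_cancel' 1 ?_
    rw [add_assoc, Nat.sub_add_cancel hm]
    simpa [Nat.ModEq] using ha)
  refine ⟨a' + Pi.single e 1, by simp [Finset.sum_add_distrib, h1], ?_⟩
  rw [chi_add, h2, chi_add, mul_assoc, ← chi_add, ← Pi.single_add, Nat.sub_add_cancel hm]
  have := chi_single K G e 1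
  rw [one_mul] at this
  rw [this, mul_one]

lemma full_reg [Fintype E] [Finite V] [Nonempty E] (G : Multigraph V E) (d : ℕ)
    (h : G.reg K ≤ d) : Full K G d := by
  have h0 : Full K G (G.reg K) := by
    rw [← hilbert_eq_iff]
    obtain ⟨N, hN⟩ := hilbert_large K G
    exact Nat.sInf_mem (s := {d : ℕ | G.hilbert K d = (G.toricSet K).ncard}) ⟨N, hN N le_rfl⟩
  induction d, h using Nat.le_induction with
  | base => exact h0
  | succ n _ ih => exact ih.succ

lemma exists_bad [Fintype E] [Finite V] [Nonempty E] (G : Multigraph V E) :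
    ∃ a : E → ℕ, ∑ e, a e + 1 ≡ G.reg K [MOD (Fintype.card K - 1)] ∧
      ∀ a' : E → ℕ, chi K G a' = chi K G a →
        ∑ e, a' e ≡ ∑ e, a e [MOD (Fintype.card K - 1)] →
        G.reg K + (Fintype.card K - 1) ≤ ∑ e, a' e + 1 := by
  classical
  have hm := card_pos' K
  obtain ⟨e⟩ := id ‹Nonempty E›
  have hlt : ∀ x y : ℕ, x < y + (Fintype.card K - 1) → x ≡ y [MOD (Fintype.card K - 1)] →
      ∃ j, x + j * (Fintype.card K - 1) = y := by
    intro x y hxy hmod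
    rcases le_or_gt x y with hle | hgt
    · obtain ⟨j, hj⟩ := (Nat.modEq_iff_dvd' hle).1 hmod
      exact ⟨j, by rw [mul_comm]; omega⟩
    · obtain ⟨j, hj⟩ := (Nat.modEq_iff_dvd' hgt.le).1 hmod.symm
      have : j = 0 := by
        by_contra hj0
        have : 1 ≤ j := by omega
        nlinarith [Nat.sub_add_cancel hgt.le]
      subst this
      omega
  rcases Nat.eq_zero_or_pos (G.reg K) with h0 | h0
  · rw [h0]
    refine ⟨Pi.single e (Fintype.card K - 1 - 1), ?_, ?_⟩
    · simp [Nat.sub_add_cancel hm, Nat.ModEq]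
    · intro a' _ h
      simp only [Finset.sum_pi_single', Finset.mem_univ, if_true] at h
      have h2 := h.add_right 1
      rw [Nat.sub_add_cancel hm] at h2
      have h3 : (Fintype.card K - 1) ∣ ∑ e, a' e + 1 :=
        (Nat.modEq_zero_iff_dvd).1 (h2.trans (by simp [Nat.ModEq]))
      have := Nat.le_of_dvd (by omega) h3
      omega
  · have hn : ¬ Full K G (G.reg K - 1) := by
      rw [← hilbert_eq_iff]
      exact Nat.notMem_of_lt_sInf (s := {d : ℕ | G.hilbert K d = (G.toricSet K).ncard})
        (by change _ < G.reg K; omega)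
    unfold Full at hn
    push Not at hn
    obtain ⟨a, ha, hbad⟩ := hn
    refine ⟨a, ?_, ?_⟩
    · have := ha.add_right 1
      rwa [Nat.sub_add_cancel h0] at this
    · intro a' h1 h2
      by_contra! hcon
      obtain ⟨j, hj⟩ := hlt (∑ e, a' e) (G.reg K - 1) (by omega) (h2.trans ha)
      refine hbad (a' + Pi.single e (j * (Fintype.card K - 1))) ?_ ?_
      · simp [Finset.sum_add_distrib, hj]
      · rw [chi_add, chi_single, mul_one, h1]

section path
variable {ι : Type} [Fintype ι] [DecidableEq ι] (k : ι → ℕ) {R : Type} [CommRing R]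

lemma pcVert_zero (i : ι) : pcVert k i 0 = Sum.inl false := by simp [pcVert]

lemma pcVert_mid (i : ι) (j : ℕ) (h0 : j ≠ 0) (h : j < k i) :
    pcVert k i j = Sum.inr ⟨i, ⟨j - 1, by omega⟩⟩ := by simp [pcVert, h0, h]

lemma pcVert_end (i : ι) (j : ℕ) (h0 : j ≠ 0) (h : k i ≤ j) :
    pcVert k i j = Sum.inl true := by simp [pcVert, h0, h]

lemma pcVert_eq_false (i : ι) (j : ℕ) : pcVert k i j = Sum.inl false ↔ j = 0 := by
  rcases eq_or_ne j 0 with h | h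
  · simp [h, pcVert_zero]
  · rcases lt_or_ge j (k i) with h1 | h1
    · simp [h, pcVert_mid k i j h h1]
    · simp [h, pcVert_end k i j h h1]

lemma pcVert_eq_true (i : ι) (j : ℕ) (hk : 0 < k i) :
    pcVert k i j = Sum.inl true ↔ k i ≤ j := by
  rcases eq_or_ne j 0 with h | h
  · simp [h, pcVert_zero, hk.ne']
  · rcases lt_or_ge j (k i) with h1 | h1
    · simp [pcVert_mid k i j h h1, h1]
    · simp [pcVert_end k i j h h1, h1]

lemma wt_interior (δ : ((i : ι) × Fin (k i)) → R) (i : ι) (t : ℕ) (ht : t + 1 < k i) :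
    wt (parallelComp k) δ (pcVert k i (t + 1)) =
      δ ⟨i, ⟨t + 1, ht⟩⟩ + δ ⟨i, ⟨t, by omega⟩⟩ := by
  unfold wt
  rw [Finset.sum_add_distrib]
  have hv : ∀ (i' : ι) (j : ℕ), j ≤ k i' → (pcVert k i' j = pcVert k i (t + 1) ↔
      i' = i ∧ j = t + 1) := by
    intro i' j hj
    constructor
    · intro h
      rw [pcVert_mid k i (t + 1) (by omega) ht] at h
      rcases eq_or_ne j 0 with h0 | h0
      · subst h0
        rw [pcVert_zero] at h
        simp at h
      · rcases lt_or_ge j (k i') with h1 | h1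
        · rw [pcVert_mid k i' j h0 h1] at h
          have h' := Sum.inr.inj h
          have hi : i' = i := congrArg Sigma.fst h'
          subst hi
          have h2 := congrArg Fin.val (eq_of_heq (Sigma.mk.inj h').2)
          simp only at h2
          exact ⟨rfl, by omega⟩
        · rw [pcVert_end k i' j h0 h1] at h
          simp at h
    · rintro ⟨rfl, rfl⟩
      rfl
  congr 1
  · rw [Finset.sum_eq_single ⟨i, ⟨t + 1, ht⟩⟩]
    · simp [parallelComp]
    · rintro ⟨i', j⟩ _ hne
      rw [if_neg]
      intro h
      obtain ⟨rfl, h2⟩ := (hv i' j j.2.le).1 h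
      exact hne (by congr 1; exact Fin.ext h2)
    · simp
  · rw [Finset.sum_eq_single ⟨i, ⟨t, by omega⟩⟩]
    · simp [parallelComp]
    · rintro ⟨i', j⟩ _ hne
      rw [if_neg]
      intro h
      obtain ⟨rfl, h2⟩ := (hv i' (j + 1) j.2).1 h
      exact hne (by congr 1; exact Fin.ext (by simpa using h2))
    · simp

lemma wt_false (hk : ∀ i, 0 < k i) (δ : ((i : ι) × Fin (k i)) → R) :
    wt (parallelComp k) δ (Sum.inl false) = ∑ i, δ ⟨i, ⟨0, hk i⟩⟩ := by
  unfold wt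
  rw [Fintype.sum_sigma]
  refine Finset.sum_congr rfl fun i _ => ?_
  rw [Finset.sum_eq_single ⟨0, hk i⟩]
  · simp [parallelComp, pcVert_eq_false]
  · rintro ⟨j, hj⟩ _ hne
    have : j ≠ 0 := fun h => hne (Fin.ext h)
    simp [parallelComp, pcVert_eq_false, this]
  · simp

lemma wt_true (hk : ∀ i, 0 < k i) (δ : ((i : ι) × Fin (k i)) → R) :
    wt (parallelComp k) δ (Sum.inl true) =
      ∑ i, δ ⟨i, ⟨k i - 1, Nat.sub_lt (hk i) one_pos⟩⟩ := by
  unfold wt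
  rw [Fintype.sum_sigma]
  refine Finset.sum_congr rfl fun i _ => ?_
  have := hk i
  rw [Finset.sum_eq_single ⟨k i - 1, Nat.sub_lt (hk i) one_pos⟩]
  · have h1 : pcVert k i (k i - 1) ≠ Sum.inl true := by
      rw [Ne, pcVert_eq_true k i _ this]; omega
    have h2 : pcVert k i (k i - 1 + 1) = Sum.inl true := by
      rw [pcVert_eq_true k i _ this]; omega
    simp [parallelComp, h1, h2]
  · rintro ⟨j, hj⟩ _ hne
    have hj' : j ≠ k i - 1 := fun h => hne (Fin.ext h)
    have h1 : pcVert k i j ≠ Sum.inl true := by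
      rw [Ne, pcVert_eq_true k i _ this]; omega
    have h2 : pcVert k i (j + 1) ≠ Sum.inl true := by
      rw [Ne, pcVert_eq_true k i _ this]; omega
    simp [parallelComp, h1, h2]
  · simp

lemma alternating (δ : ((i : ι) × Fin (k i)) → R) (hk : ∀ i, 0 < k i)
    (h : ∀ v, wt (parallelComp k) δ v = 0) (i : ι) (j : ℕ) (hj : j < k i) :
    δ ⟨i, ⟨j, hj⟩⟩ = (-1) ^ j * δ ⟨i, ⟨0, hk i⟩⟩ := by
  induction j with
  | zero => simp
  | succ j ih =>
    have := wt_interior k δ i j hj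
    rw [h, ih (by omega)] at this
    rw [pow_succ]
    linear_combination -this

lemma wt_alt (δ : ((i : ι) × Fin (k i)) → R) (hk : ∀ i, 0 < k i) (β : ι → R) (ε : R)
    (hε : ∀ i, (-1) ^ (k i - 1) = ε)
    (hδ : ∀ i (j : Fin (k i)), δ ⟨i, j⟩ = (-1) ^ (j : ℕ) * β i) (h0 : ∑ i, β i = 0) :
    ∀ v, wt (parallelComp k) δ v = 0 := by
  rintro ((_ | _) | ⟨i, t⟩)
  · rw [wt_false k hk]
    simpa [hδ] using h0
  · rw [wt_true k hk]
    simp only [hδ, hε, ← Finset.mul_sum, h0, mul_zero]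
  · have ht : t.1 + 1 < k i := by omega
    have : (Sum.inr ⟨i, t⟩ : Bool ⊕ ((i : ι) × Fin (k i - 1))) = pcVert k i (t.1 + 1) := by
      simp [pcVert, ht]
    rw [this, wt_interior k δ i t ht, hδ, hδ]
    simp only [pow_succ]
    ring

lemma sum_alt (n : ℕ) (b : R) : ∑ j : Fin n, (-1) ^ (j : ℕ) * b = if Even n then 0 else b := by
  rw [← Finset.sum_mul, Fin.sum_univ_eq_sum_range (fun j => (-1 : R) ^ j), neg_one_geom_sum]
  split_ifs <;> simp

lemma sum_parity {M : Type} [AddCommMonoid M] (f : ι → M) :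
    ∑ i, f i = ∑ i : {i // Odd (k i)}, f i.1 + ∑ i : {i // Even (k i)}, f i.1 := by
  classical
  rw [← Finset.sum_filter_add_sum_filter_not Finset.univ (fun i => Odd (k i))]
  congr 1
  · exact (Finset.sum_subtype _ (by simp) _)
  · exact (Finset.sum_subtype _ (by simp) _)

/-- The kernel of the graded weight map splits. -/
lemma kernel_split (hk : ∀ i, 0 < k i) (δ : ((i : ι) × Fin (k i)) → R)
    (h : ∀ v, wt (parallelComp k) δ v = 0) (hs : ∑ e, δ e = 0) :
    let δ₁ : ((i : {i // Odd (k i)}) × Fin (k i.1)) → R := fun e => δ ⟨e.1.1, e.2⟩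
    let δ₂ : ((i : {i // Even (k i)}) × Fin (k i.1)) → R := fun e => δ ⟨e.1.1, e.2⟩
    ((∀ v, wt (parallelComp fun i : {i // Odd (k i)} => k i.1) δ₁ v = 0) ∧ ∑ e, δ₁ e = 0) ∧
    ((∀ v, wt (parallelComp fun i : {i // Even (k i)} => k i.1) δ₂ v = 0) ∧
      ∑ e, δ₂ e = 0) := by
  intro δ₁ δ₂
  set β : ι → R := fun i => δ ⟨i, ⟨0, hk i⟩⟩ with hβ
  have halt : ∀ i (j : Fin (k i)), δ ⟨i, j⟩ = (-1) ^ (j : ℕ) * β i :=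
    fun i j => alternating k δ hk h i j j.2
  have s1 : ∑ e, δ₁ e = ∑ i : {i // Odd (k i)}, β i.1 := by
    rw [Fintype.sum_sigma]
    refine Finset.sum_congr rfl fun i _ => ?_
    simp only [δ₁, halt]
    rw [sum_alt, if_neg (Nat.not_even_iff_odd.2 i.2)]
  have s2 : ∑ e, δ₂ e = 0 := by
    rw [Fintype.sum_sigma]
    refine Finset.sum_eq_zero fun i _ => ?_
    simp only [δ₂, halt]
    rw [sum_alt, if_pos i.2]
  have s : ∑ e, δ e = ∑ e, δ₁ e + ∑ e, δ₂ e := by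
    rw [Fintype.sum_sigma, Fintype.sum_sigma, Fintype.sum_sigma, sum_parity k]
  have b1 : ∑ i : {i // Odd (k i)}, β i.1 = 0 := by
    rw [← s1, ← hs, s, s2, add_zero]
  have hf := wt_false k hk δ
  rw [h, sum_parity k] at hf
  have b2 : ∑ i : {i // Even (k i)}, β i.1 = 0 := by
    change 0 = ∑ i : {i // Odd (k i)}, β i.1 + ∑ i : {i // Even (k i)}, β i.1 at hf
    rw [b1, zero_add] at hf
    exact hf.symm
  refine ⟨⟨?_, by rw [s1, b1]⟩, ⟨?_, s2⟩⟩
  · refine wt_alt _ δ₁ (fun i => hk i.1) (fun i => β i.1) 1 (fun i => ?_) (fun i j => halt _ _) b1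
    exact Even.neg_one_pow (Nat.Odd.sub_odd i.2 odd_one)
  · refine wt_alt _ δ₂ (fun i => hk i.1) (fun i => β i.1) (-1) (fun i => ?_)
      (fun i j => halt _ _) b2
    exact Odd.neg_one_pow (Nat.Even.sub_odd (hk i.1) i.2 odd_one)

lemma wt_sub {V E : Type} [Fintype E] [DecidableEq V] (G : Multigraph V E) (a b : E → R)
    (v : V) : wt G (a - b) v = wt G a v - wt G b v := by
  unfold wt
  rw [← Finset.sum_sub_distrib]
  refine Finset.sum_congr rfl fun e _ => ?_
  split_ifs <;> simp <;> ring

end path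

end RegAux

/-- **Theorem 3.5.**  Let `G` be the parallel composition of `r ≥ 2` paths whose
lengths have mixed parities, `H₁` the parallel composition of the paths of odd length
and `H₂` the parallel composition of the paths of even length.  Then
`reg G ≥ reg H₁ + reg H₂ + (q-2)`, where `q = |K|`. -/
theorem reg_parallelComp_mixed_parity_lower_bound
    (K : Type) [Field K] [Fintype K] (r : ℕ) (hr : 2 ≤ r)
    (k : Fin r → ℕ) (hk : ∀ i, 0 < k i)
    (hodd : ∃ i, Odd (k i)) (heven : ∃ i, Even (k i)) :
    (parallelComp fun i : {i : Fin r // Odd (k i)} => k i.1).reg K +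
      (parallelComp fun i : {i : Fin r // Even (k i)} => k i.1).reg K +
      (Fintype.card K - 2) ≤ (parallelComp k).reg K := by
  classical
  obtain ⟨io, hio⟩ := hodd
  obtain ⟨ie, hie⟩ := heven
  have : Nonempty ((i : Fin r) × Fin (k i)) := ⟨⟨io, ⟨0, hk io⟩⟩⟩
  have : Nonempty ((i : {i : Fin r // Odd (k i)}) × Fin (k i.1)) := ⟨⟨⟨io, hio⟩, ⟨0, hk io⟩⟩⟩
  have : Nonempty ((i : {i : Fin r // Even (k i)}) × Fin (k i.1)) := ⟨⟨⟨ie, hie⟩, ⟨0, hk ie⟩⟩⟩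
  have hm := RegAux.card_pos' K
  obtain ⟨a₁, h1, hb1⟩ := RegAux.exists_bad K (parallelComp fun i : {i : Fin r // Odd (k i)} => k i.1)
  obtain ⟨a₂, h2, hb2⟩ :=
    RegAux.exists_bad K (parallelComp fun i : {i : Fin r // Even (k i)} => k i.1)
  set R₁ := (parallelComp fun i : {i : Fin r // Odd (k i)} => k i.1).reg K
  set R₂ := (parallelComp fun i : {i : Fin r // Even (k i)} => k i.1).reg K
  by_contra! hcon
  set m := Fintype.card K - 1 with hmdef
  have hfull := RegAux.full_reg K (parallelComp k) (R₁ + R₂ + m - 2) (by omega)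
  let a : ((i : Fin r) × Fin (k i)) → ℕ := fun e =>
    if h : Odd (k e.1) then a₁ ⟨⟨e.1, h⟩, e.2⟩
    else a₂ ⟨⟨e.1, Nat.not_odd_iff_even.1 h⟩, e.2⟩
  have hs : ∀ f : ((i : Fin r) × Fin (k i)) → ℕ, ∑ e, f e =
      ∑ e : (i : {i : Fin r // Odd (k i)}) × Fin (k i.1), f ⟨e.1.1, e.2⟩ +
      ∑ e : (i : {i : Fin r // Even (k i)}) × Fin (k i.1), f ⟨e.1.1, e.2⟩ := by
    intro f
    rw [Fintype.sum_sigma, Fintype.sum_sigma, Fintype.sum_sigma, RegAux.sum_parity k]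
  have ha1 : ∀ e : (i : {i : Fin r // Odd (k i)}) × Fin (k i.1), a ⟨e.1.1, e.2⟩ = a₁ e := by
    intro e
    simp [a, e.1.2]
  have ha2 : ∀ e : (i : {i : Fin r // Even (k i)}) × Fin (k i.1), a ⟨e.1.1, e.2⟩ = a₂ e := by
    intro e
    have : ¬ Odd (k e.1.1) := Nat.not_odd_iff_even.2 e.1.2
    simp [a, this]
  have hdeg : ∑ e, a e ≡ R₁ + R₂ + m - 2 [MOD m] := by
    rw [hs]
    simp only [ha1, ha2]
    refine Nat.ModEq.add_right_cancel' 2 ?_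
    rw [Nat.sub_add_cancel (by omega)]
    have := h1.add h2
    have h3 : R₁ + R₂ ≡ R₁ + R₂ + m [MOD m] := by simp [Nat.ModEq]
    refine Nat.ModEq.trans ?_ (this.trans h3)
    have heq : ∀ x y : ℕ, x + y + 2 = x + 1 + (y + 1) := fun x y => by ring
    rw [heq]
  obtain ⟨b, hb, hchi⟩ := hfull a hdeg
  rw [RegAux.chi_eq_iff] at hchi
  let δ : ((i : Fin r) × Fin (k i)) → ZMod m :=
    (fun e => (b e : ZMod m)) - (fun e => (a e : ZMod m))
  have hδw : ∀ v, RegAux.wt (parallelComp k) δ v = 0 := by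
    intro v
    rw [RegAux.wt_sub, sub_eq_zero]
    exact hchi v
  have hδs : ∑ e, δ e = 0 := by
    simp only [δ, Pi.sub_apply, Finset.sum_sub_distrib, ← Nat.cast_sum]
    rw [sub_eq_zero, ZMod.natCast_eq_natCast_iff, hb]
    exact hdeg.symm
  obtain ⟨⟨w1, t1⟩, ⟨w2, t2⟩⟩ := RegAux.kernel_split k hk δ hδw hδs
  have c1 := hb1 (fun e => b ⟨e.1.1, e.2⟩) (by
      rw [RegAux.chi_eq_iff]
      intro v
      have := w1 v
      rw [← sub_eq_zero, ← RegAux.wt_sub, ← this]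
      congr 1
      ext e
      simp [δ, ha1]) (by
      rw [← ZMod.natCast_eq_natCast_iff, ← sub_eq_zero, ← t1]
      simp [δ, ha1])
  have c2 := hb2 (fun e => b ⟨e.1.1, e.2⟩) (by
      rw [RegAux.chi_eq_iff]
      intro v
      have := w2 v
      rw [← sub_eq_zero, ← RegAux.wt_sub, ← this]
      congr 1
      ext e
      simp [δ, ha2]) (by
      rw [← ZMod.natCast_eq_natCast_iff, ← sub_eq_zero, ← t2]
      simp [δ, ha2])
  rw [hs] at hb
  omega
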